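/- Let g = gl(m|n), u = ⊕_{1≤i≤m, m+1≤j≤m+n} ℂE_{ij}, V = ℂ^{m|n}, fix 1 ≤ m_1 < m, and take the mixing set D = ⊕_{m_1+1≤i≤m, m+1≤j≤m+n} ℂx_{ij}. The cochain space is C ⊗ V where C = ℂ[x_{ij}, x̄_{kj} : 1≤i≤m_1 < k≤m, m+1≤j≤m+n] with x̄_{kj} = ∂_{x_{kj}}, and δ acts by δ(Σ_i f_i v_i) = Σ_{i=1}^{m_1} (Σ_j x_{ij} f_j) v_i − Σ_{i=m_1+1}^m (Σ_j ∂_{x̄_{ij}} f_j) v_i. Then ker δ = C v_1 + ⋯ + C v_m + K_3 where K_3 = {Σ_{j>m} f_j v_j : Σ_j x_{ij} f_j = 0 for all i ≤ m_1 and Σ_j ∂_{x̄_{kj}} f_j = 0 for all m_1 < k ≤ m}; im δ = {Σ_{i=1}^{m_1}(Σ_j x_{ij} f_j)v_i − Σ_{i=m_1+1}^m(Σ_j ∂_{x̄_{ij}} f_j)v_i : f_j ∈ C}; and H^*_D(u,V) = (C v_1 + ⋯ + C v_m)/im δ ⊕ K_3. -/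

import Mathlib

/-!
The differential `δ` reads only the coordinates in `v_{m+1}, …, v_{m+n}` and takes values in
`E = 𝒞 v_1 + ⋯ + 𝒞 v_m`. Hence `δ` kills `E` and depends only on the odd part of a cochain, so
that `f` is a cocycle exactly when its odd part lies in `K₃` (`mem_ker_deltaC`); this gives the
descriptions of the kernel and the image. For the cohomology, splitting a cocycle into its even and
odd parts gives a surjection `ker δ → E / im δ × K₃` (`cocycleSplit`), whose kernel is `im δ`
because `im δ ⊆ E`.
-/

/-!
STATEMENT 13: mixed `u`-cohomology of `gl(m|n)` on the natural module `V = ℂ^{m|n}` for the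
mixing set `D = ⊕_{m₁ < i ≤ m, j} ℂ x_{ij}` (with `1 ≤ m₁ < m`).  Writing `m = m₁ + m₂`
(`m₂ = m - m₁ ≥ 1`), the mixed Fock space is
`𝒞 = ℂ[x_{ij} (i ≤ m₁), x̄_{kj} (m₁ < k ≤ m)]`, on which `x_{ij}` acts by multiplication and
`x_{kj}` acts as `-∂/∂x̄_{kj}`; the differential acts by
`δ(Σ_i f_i v_i) = Σ_{i ≤ m₁} (Σ_j x_{ij} f_j) v_i - Σ_{m₁ < k ≤ m} (Σ_j ∂_{x̄_{kj}} f_j) v_k`.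
Variables are indexed by `(Fin m₁ ⊕ Fin m₂) × Fin n` (`inl i ↔ x_{ij}`, `inr k ↔ x̄_{kj}`),
and coordinates of `V` by `(Fin m₁ ⊕ Fin m₂) ⊕ Fin n`.
-/

noncomputable section

open MvPolynomial

/-- `𝒞 = ℂ[x_{ij}, x̄_{kj}]`, the mixed Fock space. -/
abbrev PolyC (m₁ m₂ n : ℕ) : Type := MvPolynomial ((Fin m₁ ⊕ Fin m₂) × Fin n) ℂ

/-- The cochain space `C_D(u,V) = 𝒞 ⊗ V`, as coordinate vectors. -/
abbrev CochainC (m₁ m₂ n : ℕ) : Type := ((Fin m₁ ⊕ Fin m₂) ⊕ Fin n) → PolyC m₁ m₂ n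

variable (m₁ m₂ n : ℕ)

/-- The differential
`δ(Σ f_i v_i) = Σ_{i=1}^{m₁} (Σ_j x_{ij} f_j) v_i - Σ_{i=m₁+1}^{m} (Σ_j ∂_{x̄_{ij}} f_j) v_i`. -/
noncomputable def deltaC : CochainC m₁ m₂ n →ₗ[ℂ] CochainC m₁ m₂ n :=
  LinearMap.pi fun s =>
    Sum.elim
      (Sum.elim
        (fun i => ∑ j : Fin n,
          (LinearMap.mulLeft ℂ (MvPolynomial.X (Sum.inl i, j) : PolyC m₁ m₂ n)).comp
            (LinearMap.proj (Sum.inr j) : CochainC m₁ m₂ n →ₗ[ℂ] PolyC m₁ m₂ n))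
        (fun k => -∑ j : Fin n,
          (MvPolynomial.pderiv (Sum.inr k, j)).toLinearMap.comp
            (LinearMap.proj (Sum.inr j) : CochainC m₁ m₂ n →ₗ[ℂ] PolyC m₁ m₂ n)))
      (fun _ => 0) s

/-- The subspace `𝒞 v_1 + ⋯ + 𝒞 v_m`. -/
def evenPartC : Submodule ℂ (CochainC m₁ m₂ n) where
  carrier := {f | ∀ j : Fin n, f (Sum.inr j) = 0}
  add_mem' := by intro a b ha hb j; simp [ha j, hb j]
  zero_mem' := by intro j; simp
  smul_mem' := by intro c a ha j; simp [ha j]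

/-- `K₃ = {Σ_{j ∈ I₁} f_j v_j : Σ_j x_{ij} f_j = 0 (i ≤ m₁) and Σ_j ∂_{x̄_{kj}} f_j = 0
(m₁ < k ≤ m)}`. -/
def KthreeC : Submodule ℂ (CochainC m₁ m₂ n) where
  carrier := {f | (∀ i : Fin m₁ ⊕ Fin m₂, f (Sum.inl i) = 0) ∧
    (∀ i : Fin m₁, ∑ j : Fin n, MvPolynomial.X (Sum.inl i, j) * f (Sum.inr j) = 0) ∧
    (∀ k : Fin m₂, ∑ j : Fin n, MvPolynomial.pderiv (Sum.inr k, j) (f (Sum.inr j)) = 0)}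
  add_mem' := by
    rintro a b ⟨ha1, ha2, ha3⟩ ⟨hb1, hb2, hb3⟩
    refine ⟨fun i => by simp [ha1 i, hb1 i], fun i => ?_, fun k => ?_⟩
    · simp only [Pi.add_apply, mul_add, Finset.sum_add_distrib, ha2 i, hb2 i, add_zero]
    · simp only [Pi.add_apply, map_add, Finset.sum_add_distrib, ha3 k, hb3 k, add_zero]
  zero_mem' := ⟨fun i => rfl, fun i => by simp, fun k => by simp⟩
  smul_mem' := by
    rintro c a ⟨ha1, ha2, ha3⟩
    refine ⟨fun i => by simp [ha1 i], fun i => ?_, fun k => ?_⟩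
    · have : ∑ j : Fin n, MvPolynomial.X (Sum.inl i, j) * (c • a) (Sum.inr j)
          = c • ∑ j : Fin n, MvPolynomial.X (Sum.inl i, j) * a (Sum.inr j) := by
        rw [Finset.smul_sum]; congr 1; funext j
        simp [MvPolynomial.smul_eq_C_mul]; ring
      rw [this, ha2 i, smul_zero]
    · have : ∑ j : Fin n, MvPolynomial.pderiv (Sum.inr k, j) ((c • a) (Sum.inr j))
          = c • ∑ j : Fin n, MvPolynomial.pderiv (Sum.inr k, j) (a (Sum.inr j)) := by
        rw [Finset.smul_sum]; congr 1; funext j; simp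
      rw [this, ha3 k, smul_zero]

/-- The inclusion `(f_j)_{j ∈ I₁} ↦ Σ_j f_j v_j` of the odd coordinates. -/
noncomputable def oddInclC : (Fin n → PolyC m₁ m₂ n) →ₗ[ℂ] CochainC m₁ m₂ n :=
  LinearMap.pi fun s =>
    Sum.elim (fun _ => (0 : (Fin n → PolyC m₁ m₂ n) →ₗ[ℂ] PolyC m₁ m₂ n))
      (fun j => LinearMap.proj j) s

section Helpers

variable {m₁ m₂ n}

lemma deltaC_inl_inl (f : CochainC m₁ m₂ n) (i : Fin m₁) :
    deltaC m₁ m₂ n f (Sum.inl (Sum.inl i)) =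
      ∑ j : Fin n, X (Sum.inl i, j) * f (Sum.inr j) := by
  simp [deltaC]

lemma deltaC_inl_inr (f : CochainC m₁ m₂ n) (k : Fin m₂) :
    deltaC m₁ m₂ n f (Sum.inl (Sum.inr k)) =
      -∑ j : Fin n, pderiv (Sum.inr k, j) (f (Sum.inr j)) := by
  simp [deltaC]

lemma deltaC_inr (f : CochainC m₁ m₂ n) (j : Fin n) :
    deltaC m₁ m₂ n f (Sum.inr j) = 0 := by
  simp [deltaC]

lemma oddInclC_inl (g : Fin n → PolyC m₁ m₂ n) (i : Fin m₁ ⊕ Fin m₂) :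
    oddInclC m₁ m₂ n g (Sum.inl i) = 0 := by
  simp [oddInclC]

lemma oddInclC_inr (g : Fin n → PolyC m₁ m₂ n) (j : Fin n) :
    oddInclC m₁ m₂ n g (Sum.inr j) = g j := by
  simp [oddInclC]

lemma deltaC_oddInclC (f : CochainC m₁ m₂ n) :
    deltaC m₁ m₂ n (oddInclC m₁ m₂ n fun j => f (Sum.inr j)) = deltaC m₁ m₂ n f := by
  funext s
  rcases s with (i | k) | j
  · simp only [deltaC_inl_inl, oddInclC_inr]
  · simp only [deltaC_inl_inr, oddInclC_inr]
  · simp only [deltaC_inr]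

lemma range_deltaC_le : LinearMap.range (deltaC m₁ m₂ n) ≤ evenPartC m₁ m₂ n := by
  rintro _ ⟨f, rfl⟩ j
  exact deltaC_inr f j

lemma mem_ker_deltaC (f : CochainC m₁ m₂ n) :
    f ∈ LinearMap.ker (deltaC m₁ m₂ n) ↔
      oddInclC m₁ m₂ n (fun j => f (Sum.inr j)) ∈ KthreeC m₁ m₂ n := by
  rw [LinearMap.mem_ker]
  constructor
  · intro h
    refine ⟨oddInclC_inl _, fun i => ?_, fun k => ?_⟩
    · simpa only [oddInclC_inr, deltaC_inl_inl, Pi.zero_apply] using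
        congrFun h (Sum.inl (Sum.inl i))
    · simpa only [oddInclC_inr, deltaC_inl_inr, Pi.zero_apply, neg_eq_zero] using
        congrFun h (Sum.inl (Sum.inr k))
  · rintro ⟨-, h₁, h₂⟩
    simp only [oddInclC_inr] at h₁ h₂
    funext s
    rcases s with (i | k) | j
    · rw [deltaC_inl_inl, h₁ i, Pi.zero_apply]
    · rw [deltaC_inl_inr, h₂ k, neg_zero, Pi.zero_apply]
    · exact deltaC_inr f j

lemma eq_oddInclC_of_mem_KthreeC {f : CochainC m₁ m₂ n} (hf : f ∈ KthreeC m₁ m₂ n) :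
    oddInclC m₁ m₂ n (fun j => f (Sum.inr j)) = f := by
  funext s
  rcases s with i | j
  · rw [oddInclC_inl, hf.1 i]
  · rw [oddInclC_inr]

lemma evenPartC_le_ker : evenPartC m₁ m₂ n ≤ LinearMap.ker (deltaC m₁ m₂ n) := by
  intro f hf
  have h : (fun j => f (Sum.inr j)) = 0 := funext hf
  rw [mem_ker_deltaC, h, map_zero]
  exact zero_mem _

lemma KthreeC_le_ker : KthreeC m₁ m₂ n ≤ LinearMap.ker (deltaC m₁ m₂ n) := by
  intro f hf
  rwa [mem_ker_deltaC, eq_oddInclC_of_mem_KthreeC hf]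

variable (m₁ m₂ n)

/-- The projection `Σ_i f_i v_i ↦ Σ_{i > m} f_i v_i` of cochains onto their odd coordinates. -/
def oddProj : CochainC m₁ m₂ n →ₗ[ℂ] CochainC m₁ m₂ n :=
  (oddInclC m₁ m₂ n).comp (LinearMap.funLeft ℂ _ Sum.inr)

/-- The projection `Σ_i f_i v_i ↦ Σ_{i ≤ m} f_i v_i` onto `𝒞 v_1 + ⋯ + 𝒞 v_m`. -/
def evenProj : CochainC m₁ m₂ n →ₗ[ℂ] evenPartC m₁ m₂ n :=
  (LinearMap.id - oddProj m₁ m₂ n).codRestrict _ fun f j =>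
    sub_eq_zero.2 (oddInclC_inr (fun j => f (Sum.inr j)) j).symm

/-- The map `ker δ → (𝒞 v_1 + ⋯ + 𝒞 v_m) / im δ × K₃` sending a cocycle to the class of its even
part and to its odd part. -/
def cocycleSplit : LinearMap.ker (deltaC m₁ m₂ n) →ₗ[ℂ]
    (evenPartC m₁ m₂ n ⧸
      (LinearMap.range (deltaC m₁ m₂ n)).comap (evenPartC m₁ m₂ n).subtype) ×
        KthreeC m₁ m₂ n :=
  LinearMap.prod
    ((Submodule.mkQ _).comp ((evenProj m₁ m₂ n).comp (Submodule.subtype _)))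
    (((oddProj m₁ m₂ n).comp (Submodule.subtype _)).codRestrict _ fun f =>
      (mem_ker_deltaC f.1).1 f.2)

variable {m₁ m₂ n}

lemma coe_evenProj (f : CochainC m₁ m₂ n) :
    (evenProj m₁ m₂ n f : CochainC m₁ m₂ n) = f - oddProj m₁ m₂ n f := rfl

lemma oddProj_of_mem_evenPartC {f : CochainC m₁ m₂ n} (hf : f ∈ evenPartC m₁ m₂ n) :
    oddProj m₁ m₂ n f = 0 := by
  have h : LinearMap.funLeft ℂ (PolyC m₁ m₂ n) Sum.inr f = 0 := funext hf
  rw [oddProj, LinearMap.comp_apply, h, map_zero]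

lemma oddProj_of_mem_KthreeC {f : CochainC m₁ m₂ n} (hf : f ∈ KthreeC m₁ m₂ n) :
    oddProj m₁ m₂ n f = f :=
  eq_oddInclC_of_mem_KthreeC hf

lemma cocycleSplit_surjective : Function.Surjective (cocycleSplit m₁ m₂ n) := by
  rintro ⟨q, k⟩
  obtain ⟨e, rfl⟩ := Submodule.mkQ_surjective _ q
  have hodd : oddProj m₁ m₂ n (e.1 + k.1) = k.1 := by
    rw [map_add, oddProj_of_mem_evenPartC e.2, oddProj_of_mem_KthreeC k.2, zero_add]
  refine ⟨⟨e.1 + k.1, add_mem (evenPartC_le_ker e.2) (KthreeC_le_ker k.2)⟩, Prod.ext ?_ ?_⟩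
  · refine congrArg (Submodule.mkQ _) (Subtype.ext ?_)
    change ((evenProj m₁ m₂ n (e.1 + k.1) : evenPartC m₁ m₂ n) : CochainC m₁ m₂ n) = e.1
    rw [coe_evenProj, hodd, add_sub_cancel_right]
  · exact Subtype.ext hodd

lemma ker_cocycleSplit : LinearMap.ker (cocycleSplit m₁ m₂ n) =
    (LinearMap.range (deltaC m₁ m₂ n)).comap (LinearMap.ker (deltaC m₁ m₂ n)).subtype := by
  ext f
  have hiff : f ∈ LinearMap.ker (cocycleSplit m₁ m₂ n) ↔
      f.1 - oddProj m₁ m₂ n f.1 ∈ LinearMap.range (deltaC m₁ m₂ n) ∧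
        oddProj m₁ m₂ n f.1 = 0 := by
    rw [LinearMap.mem_ker, Prod.ext_iff]
    exact and_congr (Submodule.Quotient.mk_eq_zero (x := evenProj m₁ m₂ n f.1) _) Subtype.ext_iff
  rw [hiff, Submodule.mem_comap, Submodule.subtype_apply]
  constructor
  · rintro ⟨h, h₀⟩
    rwa [h₀, sub_zero] at h
  · intro h
    have h₀ := oddProj_of_mem_evenPartC (range_deltaC_le h)
    exact ⟨by rwa [h₀, sub_zero], h₀⟩

end Helpers

/-- Mixed `u`-cohomology of `gl(m|n)` on the natural module for the mixing set
`D = ⊕_{m₁ < i ≤ m, j} ℂ x_{ij}`, `1 ≤ m₁ < m` (Section 4.1.3 of the paper):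
`ker δ = (𝒞 v_1 + ⋯ + 𝒞 v_m) + K₃`,
`im δ = {Σ_{i ≤ m₁}(Σ_j x_{ij} f_j) v_i - Σ_{m₁<k≤m}(Σ_j ∂_{x̄_{kj}} f_j) v_k : f_j ∈ 𝒞}`,
and `H^*_D(u,V) ≅ (𝒞 v_1 + ⋯ + 𝒞 v_m)/im δ ⊕ K₃`. -/
theorem mixed_u_cohomology_glmn_mixedFock (hm₁ : 0 < m₁) (hm₂ : 0 < m₂) :
    LinearMap.ker (deltaC m₁ m₂ n) = evenPartC m₁ m₂ n ⊔ KthreeC m₁ m₂ n ∧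
    LinearMap.range (deltaC m₁ m₂ n) =
      LinearMap.range ((deltaC m₁ m₂ n).comp (oddInclC m₁ m₂ n)) ∧
    LinearMap.range (deltaC m₁ m₂ n) ≤ evenPartC m₁ m₂ n ∧
    Nonempty
      ((↥(LinearMap.ker (deltaC m₁ m₂ n)) ⧸
          (LinearMap.range (deltaC m₁ m₂ n)).comap (LinearMap.ker (deltaC m₁ m₂ n)).subtype)
        ≃ₗ[ℂ]
       (↥(evenPartC m₁ m₂ n) ⧸
          (LinearMap.range (deltaC m₁ m₂ n)).comap (evenPartC m₁ m₂ n).subtype)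
         × ↥(KthreeC m₁ m₂ n)) := by
  refine ⟨le_antisymm (fun f hf => ?_) (sup_le evenPartC_le_ker KthreeC_le_ker),
    le_antisymm ?_ (LinearMap.range_comp_le_range _ _), range_deltaC_le,
    ⟨(Submodule.quotEquivOfEq _ _ ker_cocycleSplit.symm).trans
      ((cocycleSplit m₁ m₂ n).quotKerEquivOfSurjective cocycleSplit_surjective)⟩⟩
  · exact Submodule.mem_sup.2 ⟨_, (evenProj m₁ m₂ n f).2, _, (mem_ker_deltaC f).1 hf,
      (congrArg (· + _) (coe_evenProj f)).trans (sub_add_cancel f (oddProj m₁ m₂ n f))⟩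
  · rintro _ ⟨f, rfl⟩
    exact ⟨_, deltaC_oddInclC f⟩
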